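/- arXiv:2406.04012 — 4 statements merged into one kernel-verified Lean document; each statement's English description precedes it below -/
import Mathlib

section
/- For every n ≥ 1 there exist points x₁,…,x_n ∈ ℝ^d such that the equal-weight Gaussian mixture q_n = (1/n) Σ_{i=1}^n k_ε(· − x_i) satisfies KL(q_n‖μ*) ≤ C² · (log n + 1)/n. In other words, the minimum of the reverse Kullback–Leibler divergence to μ* over all equal-weight n-component Gaussian mixtures with covariance ε²I_d is at most C²(log n + 1)/n. -/
/-!
The points are drawn independently from `P`. Writing `k` for the kernel, `p = μ*` and `q` for the
random mixture, the inequality `log t ≤ t - 1` gives pointwise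
`q log (q / p) ≤ (q - p)² / p + (q - p)`, that is, `KL ≤ χ²` after integration, since `q` and `p`
have the same total mass. For fixed `x`, `q x` is the mean of `n` independent copies of
`k (x - ·)` under `P`, each of expectation `p x`, so `(q x - p x)²` has expectation at most
`(∫ k (x - m)² dP(m)) / n`. By Tonelli the expected `χ²` is at most `C² / n`; hence some choice of
points has `χ² ≤ C² / n`, and the factor `log n + 1 ≥ 1` is not needed.
-/

open MeasureTheory Real

noncomputable def kG (d : ℕ) (ε : ℝ) (x : EuclideanSpace ℝ (Fin d)) : ℝ :=
  (2 * π * ε ^ 2) ^ (-(d : ℝ) / 2) * Real.exp (-‖x‖ ^ 2 / (2 * ε ^ 2))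

section Aux

variable {d : ℕ} {ε : ℝ}

lemma continuous_kG : Continuous (kG d ε) := by
  unfold kG; fun_prop

lemma kG_pos (hε : 0 < ε) (x : EuclideanSpace ℝ (Fin d)) : 0 < kG d ε x := by
  unfold kG; positivity

lemma kG_le (hε : 0 < ε) (x : EuclideanSpace ℝ (Fin d)) :
    kG d ε x ≤ (2 * π * ε ^ 2) ^ (-(d : ℝ) / 2) := by
  unfold kG
  refine mul_le_of_le_one_right (by positivity) (Real.exp_le_one_iff.2 ?_)
  exact div_nonpos_of_nonpos_of_nonneg (by simp) (by positivity)

lemma integrable_kG (hε : 0 < ε) : Integrable (kG d ε) := by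
  unfold kG
  refine Integrable.const_mul ?_ _
  have h := GaussianFourier.integrable_cexp_neg_mul_sq_norm_add (V := EuclideanSpace ℝ (Fin d))
    (b := ((1 / (2 * ε ^ 2) : ℝ) : ℂ)) (by rw [Complex.ofReal_re]; positivity) 0 0
  refine h.re.congr (Filter.Eventually.of_forall fun x => ?_)
  simp only [zero_mul, add_zero]
  rw [← Complex.ofReal_pow, ← Complex.ofReal_neg, ← Complex.ofReal_mul]
  rw [← Complex.ofReal_exp]
  simp only [RCLike.re_to_complex, Complex.ofReal_re]
  congr 1; ring

variable (P : Measure (EuclideanSpace ℝ (Fin d))) [IsProbabilityMeasure P]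

lemma integrable_kG_prod (hε : 0 < ε) :
    Integrable (fun z : EuclideanSpace ℝ (Fin d) × EuclideanSpace ℝ (Fin d) =>
      kG d ε (z.1 - z.2)) (volume.prod P) := by
  have hc : Continuous (fun z : EuclideanSpace ℝ (Fin d) × EuclideanSpace ℝ (Fin d) =>
      kG d ε (z.1 - z.2)) := continuous_kG.comp (by fun_prop)
  rw [integrable_prod_iff' hc.aestronglyMeasurable]
  refine ⟨Filter.Eventually.of_forall fun y => (integrable_kG hε).comp_sub_right y, ?_⟩
  have : ∀ y, ∫ x, ‖kG d ε (x - y)‖ = ∫ x, ‖kG d ε x‖ := fun y =>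
    integral_sub_right_eq_self (fun x => ‖kG d ε x‖) y
  simp only [this]
  exact integrable_const _

lemma measurable_mixture : Measurable (fun x => ∫ w, kG d ε (x - w) ∂P) := by
  have hc : Continuous (fun z : EuclideanSpace ℝ (Fin d) × EuclideanSpace ℝ (Fin d) =>
      kG d ε (z.1 - z.2)) := continuous_kG.comp (by fun_prop)
  exact (hc.stronglyMeasurable.integral_prod_right (ν := P)).measurable

lemma integral_mixture (hε : 0 < ε) :
    ∫ x, ∫ w, kG d ε (x - w) ∂P = ∫ x, kG d ε x := by
  rw [integral_integral_swap (integrable_kG_prod P hε)]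
  have : ∀ y, ∫ x, kG d ε (x - y) = ∫ x, kG d ε x := fun y =>
    integral_sub_right_eq_self (kG d ε) y
  simp [this]

/-- The mean of `n` i.i.d. bounded variables has mean squared deviation at most the second moment
divided by `n`. -/
lemma lintegral_sq_dev_le (hε : 0 < ε) {n : ℕ} (hn : 1 ≤ n) (x : EuclideanSpace ℝ (Fin d)) :
    ∫⁻ ω, ENNReal.ofReal (((1 / n : ℝ) * ∑ i, kG d ε (x - ω i) - ∫ w, kG d ε (x - w) ∂P) ^ 2)
        ∂(Measure.pi fun _ : Fin n => P)
      ≤ ENNReal.ofReal ((∫ m, (kG d ε (x - m)) ^ 2 ∂P) / n) := by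
  have hn0 : (n : ℝ) ≠ 0 := by positivity
  have hc : Continuous (fun w => kG d ε (x - w)) := continuous_kG.comp (by fun_prop)
  have hb : MemLp (fun w => kG d ε (x - w)) 2 P :=
    MemLp.of_bound hc.aestronglyMeasurable _ (Filter.Eventually.of_forall fun w => by
      rw [Real.norm_of_nonneg (kG_pos hε _).le]; exact kG_le hε _)
  set μ := Measure.pi fun _ : Fin n => P
  let X : Fin n → (Fin n → EuclideanSpace ℝ (Fin d)) → ℝ := fun i ω => kG d ε (x - ω i)
  have hmp : ∀ i : Fin n, MeasurePreserving (fun ω : Fin n → EuclideanSpace ℝ (Fin d) => ω i) μ P :=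
    fun i => measurePreserving_eval (fun _ : Fin n => P) i
  have hX : ∀ i, MemLp (X i) 2 μ := fun i => hb.comp_measurePreserving (hmp i)
  have hXE : ∀ i, ∫ ω, X i ω ∂μ = ∫ w, kG d ε (x - w) ∂P := fun i => by
    rw [← (hmp i).map_eq, integral_map (hmp i).aemeasurable]
    exact hc.aestronglyMeasurable
  have hXE2 : ∀ i, ∫ ω, (X i ω) ^ 2 ∂μ = ∫ w, (kG d ε (x - w)) ^ 2 ∂P := fun i => by
    conv_rhs => rw [← (hmp i).map_eq]
    have hc2 : Continuous (fun w => kG d ε (x - w) ^ 2) := hc.pow 2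
    rw [integral_map (hmp i).aemeasurable hc2.aestronglyMeasurable]
  have hind : ProbabilityTheory.iIndepFun X μ :=
    ProbabilityTheory.iIndepFun_pi (μ := fun _ : Fin n => P) (X := fun _ w => kG d ε (x - w))
      (fun _ => hc.aemeasurable)
  have hS : MemLp (∑ i, X i) 2 μ := memLp_finsetSum' _ fun i _ => hX i
  have hY : MemLp (fun ω => (1 / n : ℝ) * (∑ i, X i) ω) 2 μ := hS.const_mul _
  have hYE : ∫ ω, (1 / n : ℝ) * (∑ i, X i) ω ∂μ = ∫ w, kG d ε (x - w) ∂P := by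
    rw [integral_const_mul]
    simp only [Finset.sum_apply]
    rw [integral_finsetSum _ fun i _ => (hX i).integrable (by norm_num)]
    simp only [hXE, Finset.sum_const, Finset.card_univ, Fintype.card_fin, nsmul_eq_mul]
    field_simp
  have hV : ProbabilityTheory.variance (fun ω => (1 / n : ℝ) * (∑ i, X i) ω) μ
      ≤ (∫ m, (kG d ε (x - m)) ^ 2 ∂P) / n := by
    rw [ProbabilityTheory.variance_const_mul,
      ProbabilityTheory.IndepFun.variance_sum (fun i _ => hX i)
        (fun i _ j _ hij => hind.indepFun hij)]
    have h1 : ∑ i, ProbabilityTheory.variance (X i) μ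
        ≤ ∑ _i : Fin n, ∫ m, (kG d ε (x - m)) ^ 2 ∂P :=
      Finset.sum_le_sum fun i _ => by
        rw [← hXE2 i]
        exact ProbabilityTheory.variance_le_expectation_sq (hX i).aestronglyMeasurable
    calc _ ≤ (1 / n : ℝ) ^ 2 * ∑ _i : Fin n, ∫ m, (kG d ε (x - m)) ^ 2 ∂P := by gcongr
      _ = _ := by
        simp only [Finset.sum_const, Finset.card_univ, Fintype.card_fin, nsmul_eq_mul]
        field_simp
  rw [← hYE]
  refine le_trans (le_of_eq ?_) (ENNReal.ofReal_le_ofReal hV)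
  rw [hY.ofReal_variance_eq, ProbabilityTheory.evariance_eq_lintegral_ofReal]
  simp [X]

/-- Some choice of points makes the chi-squared integral at most `C² / n`. -/
lemma exists_chiSq_le (hε : 0 < ε) {n : ℕ} (hn : 1 ≤ n)
    (hpos : ∀ x, 0 < ∫ w, kG d ε (x - w) ∂P)
    (hfin : Integrable
      (fun x => (∫ m, (kG d ε (x - m)) ^ 2 ∂P) / ∫ w, kG d ε (x - w) ∂P)) :
    ∃ xs : Fin n → EuclideanSpace ℝ (Fin d),
      ∫⁻ x, ENNReal.ofReal (((1 / n : ℝ) * ∑ i, kG d ε (x - xs i) - ∫ w, kG d ε (x - w) ∂P) ^ 2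
          / ∫ w, kG d ε (x - w) ∂P)
        ≤ ENNReal.ofReal
          ((∫ x, (∫ m, (kG d ε (x - m)) ^ 2 ∂P) / ∫ w, kG d ε (x - w) ∂P) / n) := by
  have hmix := measurable_mixture (ε := ε) P
  have hm : Measurable (fun z : (Fin n → EuclideanSpace ℝ (Fin d)) × EuclideanSpace ℝ (Fin d) =>
      ENNReal.ofReal (((1 / n : ℝ) * ∑ i, kG d ε (z.2 - z.1 i)
        - ∫ w, kG d ε (z.2 - w) ∂P) ^ 2 / ∫ w, kG d ε (z.2 - w) ∂P)) := by
    have h2 : Measurable (fun z : (Fin n → EuclideanSpace ℝ (Fin d)) ×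
        EuclideanSpace ℝ (Fin d) => ∫ w, kG d ε (z.2 - w) ∂P) := hmix.comp measurable_snd
    have h1 : Measurable (fun z : (Fin n → EuclideanSpace ℝ (Fin d)) × EuclideanSpace ℝ (Fin d) =>
        (1 / n : ℝ) * ∑ i, kG d ε (z.2 - z.1 i)) :=
      Measurable.const_mul (Finset.measurable_sum _ fun i _ =>
        continuous_kG.measurable.comp (by fun_prop)) _
    exact (((h1.sub h2).pow_const 2).div h2).ennreal_ofReal
  obtain ⟨xs, hxs⟩ := exists_le_lintegral (μ := Measure.pi fun _ : Fin n => P)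
    (hm.lintegral_prod_right' (ν := volume)).aemeasurable
  refine ⟨xs, hxs.trans ?_⟩
  rw [lintegral_lintegral_swap hm.aemeasurable]
  rw [← integral_div, ofReal_integral_eq_lintegral_ofReal (hfin.div_const _)
    (Filter.Eventually.of_forall fun x => div_nonneg (div_nonneg
      (integral_nonneg fun _ => sq_nonneg _) (hpos x).le) (Nat.cast_nonneg _))]
  refine lintegral_mono fun x => ?_
  have hp := hpos x
  have hne : (ENNReal.ofReal (∫ w, kG d ε (x - w) ∂P))⁻¹ ≠ ⊤ := by simpa using hp
  have hdev := lintegral_sq_dev_le P hε hn x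
  rw [div_right_comm]
  simp only [ENNReal.ofReal_div_of_pos hp]
  simp only [ENNReal.div_eq_inv_mul]
  rw [lintegral_const_mul' _ _ hne]
  gcongr

end Aux

/-- the minimum of the reverse KL divergence to the mixture target `μ*`
over equal-weight `n`-component Gaussian mixtures with covariance `ε² I_d` is at most
`C² (log n + 1) / n`. -/
theorem stmt_0 (d : ℕ) (hd : 1 ≤ d) (ε : ℝ) (hε : 0 < ε)
    (P : Measure (EuclideanSpace ℝ (Fin d))) [IsProbabilityMeasure P]
    (μstar : EuclideanSpace ℝ (Fin d) → ℝ)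
    (hμstar : ∀ x, μstar x = ∫ w, kG d ε (x - w) ∂P)
    (hpos : ∀ x, 0 < μstar x)
    (C2 : ℝ)
    (hC2 : C2 = ∫ x, (∫ m, (kG d ε (x - m)) ^ 2 ∂P) / μstar x)
    (hC2fin : Integrable (fun x => (∫ m, (kG d ε (x - m)) ^ 2 ∂P) / μstar x))
    (n : ℕ) (hn : 1 ≤ n) :
    ∃ xs : Fin n → EuclideanSpace ℝ (Fin d),
      (∫ x, ((1 / n : ℝ) * ∑ i, kG d ε (x - xs i)) *
          Real.log (((1 / n : ℝ) * ∑ i, kG d ε (x - xs i)) / μstar x)) ≤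
        C2 * (Real.log n + 1) / n := by
  obtain rfl : μstar = fun x => ∫ w, kG d ε (x - w) ∂P := funext hμstar
  simp only at hpos hC2 hC2fin ⊢
  obtain ⟨xs, hxs⟩ := exists_chiSq_le P hε hn hpos hC2fin
  rw [← hC2] at hxs
  have hC0 : 0 ≤ C2 := hC2 ▸ integral_nonneg fun x =>
    div_nonneg (integral_nonneg fun _ => sq_nonneg _) (hpos x).le
  have hlog : 0 ≤ Real.log n := Real.log_natCast_nonneg n
  have hn0 : (0 : ℝ) < n := by exact_mod_cast hn
  refine ⟨xs, ?_⟩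
  have hbound : C2 / n ≤ C2 * (Real.log n + 1) / n := by
    gcongr; nlinarith
  refine le_trans ?_ hbound
  -- A non-integrable integrand has Bochner integral `0`, which is below the nonnegative bound.
  by_cases hint : Integrable (fun x => ((1 / n : ℝ) * ∑ i, kG d ε (x - xs i)) *
      Real.log (((1 / n : ℝ) * ∑ i, kG d ε (x - xs i)) / ∫ w, kG d ε (x - w) ∂P))
  swap
  · rw [integral_undef hint]; positivity
  have hki : ∀ i, Integrable (fun x => kG d ε (x - xs i)) := fun i =>
    (integrable_kG hε).comp_sub_right (xs i)
  have hqi : Integrable (fun x => (1 / n : ℝ) * ∑ i, kG d ε (x - xs i)) :=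
    (integrable_finsetSum _ fun i _ => hki i).const_mul _
  have hpi : Integrable (fun x => ∫ w, kG d ε (x - w) ∂P) :=
    (integrable_kG_prod P hε).integral_prod_left
  have hchi0 : ∀ x, 0 ≤ ((1 / n : ℝ) * ∑ i, kG d ε (x - xs i) - ∫ w, kG d ε (x - w) ∂P) ^ 2
      / ∫ w, kG d ε (x - w) ∂P := fun x => div_nonneg (sq_nonneg _) (hpos x).le
  have hchim : AEStronglyMeasurable (fun x =>
      ((1 / n : ℝ) * ∑ i, kG d ε (x - xs i) - ∫ w, kG d ε (x - w) ∂P) ^ 2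
      / ∫ w, kG d ε (x - w) ∂P) volume :=
    (((hqi.sub hpi).aestronglyMeasurable.aemeasurable.pow_const 2).div
      (measurable_mixture P).aemeasurable).aestronglyMeasurable
  have hchii : Integrable (fun x =>
      ((1 / n : ℝ) * ∑ i, kG d ε (x - xs i) - ∫ w, kG d ε (x - w) ∂P) ^ 2
      / ∫ w, kG d ε (x - w) ∂P) :=
    (lintegral_ofReal_ne_top_iff_integrable hchim (Filter.Eventually.of_forall hchi0)).1
      (hxs.trans_lt ENNReal.ofReal_lt_top).ne
  have hqp : ∫ x, ((1 / n : ℝ) * ∑ i, kG d ε (x - xs i) - ∫ w, kG d ε (x - w) ∂P) = 0 := by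
    rw [integral_sub hqi hpi, integral_mixture P hε, integral_const_mul,
      integral_finsetSum _ fun i _ => hki i]
    have : ∀ i, ∫ x, kG d ε (x - xs i) = ∫ x, kG d ε x := fun i =>
      integral_sub_right_eq_self (kG d ε) (xs i)
    simp only [this, Finset.sum_const, Finset.card_univ, Fintype.card_fin, nsmul_eq_mul]
    field_simp
    simp
  calc _ ≤ ∫ x, (((1 / n : ℝ) * ∑ i, kG d ε (x - xs i) - ∫ w, kG d ε (x - w) ∂P) ^ 2
        / (∫ w, kG d ε (x - w) ∂P)
        + ((1 / n : ℝ) * ∑ i, kG d ε (x - xs i) - ∫ w, kG d ε (x - w) ∂P)) := by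
        refine integral_mono hint (hchii.add (hqi.sub hpi)) fun x => ?_
        have hp := hpos x
        have hq : 0 < (1 / n : ℝ) * ∑ i, kG d ε (x - xs i) :=
          mul_pos (by positivity) (Finset.sum_pos (fun i _ => kG_pos hε _)
            ⟨⟨0, hn⟩, Finset.mem_univ _⟩)
        dsimp only
        generalize (1 / n : ℝ) * ∑ i, kG d ε (x - xs i) = q at hq ⊢
        generalize ∫ w, kG d ε (x - w) ∂P = p at hp ⊢
        calc q * Real.log (q / p) ≤ q * (q / p - 1) := by
              gcongr; exact Real.log_le_sub_one_of_pos (by positivity)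
          _ = (q - p) ^ 2 / p + (q - p) := by field_simp; ring
    _ = ∫ x, ((1 / n : ℝ) * ∑ i, kG d ε (x - xs i) - ∫ w, kG d ε (x - w) ∂P) ^ 2
        / ∫ w, kG d ε (x - w) ∂P := by
        refine (integral_add hchii (hqi.sub hpi)).trans ?_
        simp only [Pi.sub_apply]
        rw [hqp, add_zero]
    _ ≤ C2 / n := by
        rw [integral_eq_lintegral_of_nonneg_ae (Filter.Eventually.of_forall hchi0) hchim]
        exact ENNReal.toReal_le_of_le_ofReal (by positivity) hxs
end

section
/- The function B defined on [0,∞) by B(x) = (x log x − x + 1)/(x − 1)² for x ≠ 1 (with the convention 0·log 0 = 0, so B(0) = 1) is monotone decreasing: for all real x, y with 0 ≤ x ≤ y, x ≠ 1 and y ≠ 1, one has (y log y − y + 1)/(y − 1)² ≤ (x log x − x + 1)/(x − 1)². -/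
/-!
Write `B` for the function in question. For `x > 0`, `x ≠ 1`,
`B'(x) = (2 (x - 1) - (x + 1) log x) / (x - 1)³`. The function `(x + 1) log x - 2 (x - 1)` is
increasing on `(0, ∞)`, because its derivative `log x + 1/x - 1` is nonnegative, and vanishes at `1`,
so it has the sign of `x - 1`. Hence `B' ≤ 0` on both sides of `1`, and `B` is decreasing on `[0, 1)`
and on `(1, ∞)`.

The two branches are compared through the value `1/2`, the limit of `B` at `1`:
`x log x - (x² - 1)/2` is decreasing on `[0, ∞)`, its derivative being `log x + 1 - x ≤ 0`, and
vanishes at `1`, which says `B ≥ 1/2` on `[0, 1)` and `B ≤ 1/2` on `(1, ∞)`.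
-/

lemma monotoneOn_add_one_mul_log_sub :
    MonotoneOn (fun x : ℝ => (x + 1) * Real.log x - 2 * (x - 1)) (Set.Ioi 0) := by
  have hd : ∀ x : ℝ, 0 < x → HasDerivAt (fun x : ℝ => (x + 1) * Real.log x - 2 * (x - 1))
      (1 * Real.log x + (x + 1) * x⁻¹ - 2 * 1) x := fun x hx =>
    (((hasDerivAt_id' x).add_const 1).mul (Real.hasDerivAt_log hx.ne')).sub
      (((hasDerivAt_id' x).sub_const 1).const_mul 2)
  refine monotoneOn_of_deriv_nonneg (convex_Ioi 0)
    (fun x hx => (hd x hx).continuousAt.continuousWithinAt)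
    (fun x hx => (hd x (interior_subset hx)).differentiableAt.differentiableWithinAt) ?_
  intro x hx
  have hx0 : 0 < x := interior_subset hx
  rw [(hd x hx0).deriv]
  have h1 := Real.one_sub_inv_le_log_of_pos hx0
  have h2 : x * x⁻¹ = 1 := mul_inv_cancel₀ hx0.ne'
  linarith

lemma antitoneOn_mul_log_sub_sq :
    AntitoneOn (fun x : ℝ => x * Real.log x - (x ^ 2 - 1) / 2) (Set.Ici 0) := by
  refine antitoneOn_of_deriv_nonpos (convex_Ici 0)
    (Real.continuous_mul_log.sub (by fun_prop)).continuousOn ?_ ?_ <;>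
  · intro x hx
    rw [interior_Ici] at hx
    have hd : HasDerivAt (fun x : ℝ => x * Real.log x - (x ^ 2 - 1) / 2)
        (Real.log x + 1 - (2 : ℕ) * x ^ (2 - 1) / 2) x :=
      (Real.hasDerivAt_mul_log (ne_of_gt hx)).sub (((hasDerivAt_pow 2 x).sub_const 1).div_const 2)
    first
    | exact hd.differentiableAt.differentiableWithinAt
    | rw [hd.deriv]
      have := Real.log_le_sub_one_of_pos hx
      norm_num
      linarith

/-- `B` is differentiable with nonpositive derivative away from `1`: the numerator in the quotient
rule multiplies out to `(x - 1) * (2 * (x - 1) - (x + 1) * log x)`. -/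
lemma exists_hasDerivAt_nonpos {x : ℝ} (hx : 0 < x) (hx1 : x ≠ 1) :
    ∃ d ≤ 0, HasDerivAt (fun x : ℝ => (x * Real.log x - x + 1) / (x - 1) ^ 2) d x := by
  have hne : x - 1 ≠ 0 := sub_ne_zero.mpr hx1
  have hd := ((((Real.hasDerivAt_mul_log hx.ne').sub (hasDerivAt_id' x)).add_const 1).div
    (((hasDerivAt_id' x).sub_const 1).pow 2) (pow_ne_zero 2 hne))
  refine ⟨_, ?_, hd⟩
  refine div_nonpos_of_nonpos_of_nonneg ?_ (by positivity)
  have key : (x - 1) * (2 * (x - 1) - (x + 1) * Real.log x) ≤ 0 := by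
    rcases lt_or_gt_of_ne hx1 with h | h
    · have := monotoneOn_add_one_mul_log_sub (Set.mem_Ioi.2 hx) (Set.mem_Ioi.2 one_pos) h.le
      simp at this
      exact mul_nonpos_of_nonpos_of_nonneg (by linarith) (by linarith)
    · have := monotoneOn_add_one_mul_log_sub (Set.mem_Ioi.2 one_pos) (Set.mem_Ioi.2 hx) h.le
      simp at this
      exact mul_nonpos_of_nonneg_of_nonpos (by linarith) (by linarith)
  simp
  linarith

/-- On an interval of `[0, ∞)` avoiding the singularity at `1`, `B` is decreasing. -/
lemma antitoneOn_of_subset {s : Set ℝ} (hs : Convex ℝ s) (h0 : s ⊆ Set.Ici 0) (h1 : 1 ∉ s) :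
    AntitoneOn (fun x : ℝ => (x * Real.log x - x + 1) / (x - 1) ^ 2) s := by
  have hne : ∀ x ∈ s, x ≠ 1 := fun x hx h => h1 (h ▸ hx)
  have hpos : ∀ x ∈ interior s, 0 < x := fun x hx => by
    have := interior_mono h0 hx
    rwa [interior_Ici] at this
  refine antitoneOn_of_deriv_nonpos hs ?_ ?_ ?_
  · exact ((Real.continuous_mul_log.sub continuous_id).add continuous_const).continuousOn.div
      (by fun_prop) fun x hx => pow_ne_zero 2 (sub_ne_zero.mpr (hne x hx))
  · intro x hx
    obtain ⟨d, -, hd⟩ := exists_hasDerivAt_nonpos (hpos x hx) (hne x (interior_subset hx))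
    exact hd.differentiableAt.differentiableWithinAt
  · intro x hx
    obtain ⟨d, hd0, hd⟩ := exists_hasDerivAt_nonpos (hpos x hx) (hne x (interior_subset hx))
    rwa [hd.deriv]

/-- Lemma C.1: the function `B(x) = (x log x - x + 1)/(x-1)²` is monotone
decreasing on `[0, ∞)` (away from the removable singularity at `x = 1`). Note that in
Lean `Real.log 0 = 0`, which realizes the convention `0 · log 0 = 0`. -/
theorem stmt_4 (x y : ℝ) (hx : 0 ≤ x) (hxy : x ≤ y) (hx1 : x ≠ 1) (hy1 : y ≠ 1) :
    (y * Real.log y - y + 1) / (y - 1) ^ 2 ≤ (x * Real.log x - x + 1) / (x - 1) ^ 2 := by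
  rcases lt_or_gt_of_ne hx1 with hx' | hx'
  · rcases lt_or_gt_of_ne hy1 with hy' | hy'
    · exact antitoneOn_of_subset (convex_Ico 0 1) (fun _ h => h.1) (by simp)
        ⟨hx, hx'⟩ ⟨hx.trans hxy, hy'⟩ hxy
    · have h1 := antitoneOn_mul_log_sub_sq (Set.mem_Ici.2 hx) (Set.mem_Ici.2 zero_le_one) hx'.le
      have h2 := antitoneOn_mul_log_sub_sq (Set.mem_Ici.2 zero_le_one)
        (Set.mem_Ici.2 (hx.trans hxy)) hy'.le
      simp at h1 h2
      have hxs : 0 < (x - 1) ^ 2 := sq_pos_of_ne_zero (sub_ne_zero.mpr hx1)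
      have hys : 0 < (y - 1) ^ 2 := sq_pos_of_ne_zero (sub_ne_zero.mpr hy1)
      -- `1 / 2` is the limit of the quotient at the removable singularity.
      trans (1 / 2 : ℝ)
      · rw [div_le_iff₀ hys]
        linarith
      · rw [le_div_iff₀ hxs]
        linarith
  · exact antitoneOn_of_subset (convex_Ioi 1)
      (fun _ h => Set.mem_Ici.2 (zero_le_one.trans (le_of_lt (Set.mem_Ioi.1 h)))) (by simp)
      hx' (hx'.trans_le hxy) hxy
end

section
/- For every real x ≥ 0 with x ≠ 1, one has (x log x − x + 1)/(x − 1) ≤ √x − 1. -/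
/-!
Write `x = s ^ 2` with `s = √x`. After clearing the denominator `x - 1`, the claim for `s > 0`
compares `log s` with `(s - s⁻¹) / 2 = sinh (log s)`: it says `log s ≤ sinh (log s)` when `s > 1`
and the reverse when `s < 1`. Both hold because `t ≤ sinh t` exactly when `0 ≤ t`, and
`sinh t ≤ t` exactly when `t ≤ 0`.
-/

/-- Lemma C.2: for `x ≥ 0`, `x ≠ 1`,
`(x log x - x + 1)/(x - 1) ≤ √x - 1`. In Lean `Real.log 0 = 0`, realizing the
convention `0 · log 0 = 0`. -/
theorem stmt_5 (x : ℝ) (hx : 0 ≤ x) (hx1 : x ≠ 1) :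
    (x * Real.log x - x + 1) / (x - 1) ≤ Real.sqrt x - 1 := by
  obtain ⟨s, hs, rfl⟩ : ∃ s : ℝ, 0 ≤ s ∧ x = s ^ 2 :=
    ⟨Real.sqrt x, Real.sqrt_nonneg x, (Real.sq_sqrt hx).symm⟩
  rw [Real.sqrt_sq hs, Real.log_pow]
  rcases hs.eq_or_lt with rfl | hs
  · norm_num
  have hs1 : s ≠ 1 := by rintro rfl; norm_num at hx1
  have hsinh : s ^ 2 * (2 * Real.sinh (Real.log s)) = s * (s ^ 2 - 1) := by
    rw [Real.sinh_log hs]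
    field_simp
  push_cast
  rcases hs1.lt_or_gt with h | h
  · have hlog : Real.sinh (Real.log s) ≤ Real.log s :=
      Real.sinh_le_self_iff.2 (Real.log_nonpos hs.le h.le)
    rw [div_le_iff_of_neg (by nlinarith)]
    nlinarith [mul_le_mul_of_nonneg_left hlog (sq_nonneg s)]
  · have hlog : Real.log s ≤ Real.sinh (Real.log s) :=
      Real.self_le_sinh_iff.2 (Real.log_nonneg h.le)
    rw [div_le_iff₀ (by nlinarith)]
    nlinarith [mul_le_mul_of_nonneg_left hlog (sq_nonneg s)]
end

section
/- For every real α ∈ [0,1], one has −α + (1−α) log(1−α) + 2α√(1−α) ≤ 0. -/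
/-!
With `s = √(1 - α)` the left-hand side is `-(1 - s²) + 2 s² log s + 2 (1 - s²) s`.
Bounding `log s ≤ s - 1` turns this into exactly `-(1 - s)²`.
-/

/-- Lemma C.3: for `α ∈ [0,1]`,
`-α + (1-α) log(1-α) + 2α√(1-α) ≤ 0`. In Lean `Real.log 0 = 0`, realizing the
convention `log 0 = 0` (the case `α = 1` reads `-1 ≤ 0`). -/
theorem stmt_6 (α : ℝ) (hα : α ∈ Set.Icc (0 : ℝ) 1) :
    -α + (1 - α) * Real.log (1 - α) + 2 * α * Real.sqrt (1 - α) ≤ 0 := by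
  obtain ⟨h0, h1⟩ := hα
  rcases h1.eq_or_lt with rfl | h1
  · norm_num
  have hs : 0 < Real.sqrt (1 - α) := Real.sqrt_pos.mpr (by linarith)
  have hsq : Real.sqrt (1 - α) ^ 2 = 1 - α := Real.sq_sqrt (by linarith)
  generalize Real.sqrt (1 - α) = s at hs hsq ⊢
  have hlog : Real.log (1 - α) = 2 * Real.log s := by
    rw [← hsq, Real.log_pow]
    norm_num
  obtain rfl : α = 1 - s ^ 2 := by linarith
  rw [hlog]
  have hb := mul_le_mul_of_nonneg_left (Real.log_le_sub_one_of_pos hs) (sq_nonneg s)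
  nlinarith [sq_nonneg (1 - s)]
end
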